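/- Under the MS-LS model with α_i + α_j = α for all pairs i, j, the conditional variance of the nodal strength of a node within state k satisfies Var(Y_t | s_t = k) = e^{2α}(N−1)(8σ_k²β + 1)^{−d/2} + (N−1)(N−2) e^{2α} (2σ_k²β + 1)^{−d/2} (6σ_k²β + 1)^{−d/2} + (N−1) e^α (4σ_k²β + 1)^{−d/2} − (N−1)² e^{2α} (4σ_k²β + 1)^{−d}. -/

import Mathlib

open MeasureTheory ProbabilityTheory Real

noncomputable section

/-- Density of the centered isotropic Gaussian `N(0, σ² I_d)` on `ℝ^d`. -/
def gaussPdf (d : ℕ) (σ2 : ℝ) (x : EuclideanSpace ℝ (Fin d)) : ℝ :=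
  (2 * Real.pi * σ2) ^ (-(d : ℝ) / 2) * Real.exp (-‖x‖ ^ 2 / (2 * σ2))

/-- The centered isotropic Gaussian measure `N(0, σ² I_d)` on `ℝ^d`. -/
def gaussMeasure (d : ℕ) (σ2 : ℝ) : Measure (EuclideanSpace ℝ (Fin d)) :=
  volume.withDensity fun x => ENNReal.ofReal (gaussPdf d σ2 x)

/-- Unordered pairs of distinct nodes, represented as ordered pairs `(i, j)` with `i < j`. -/
abbrev Pairs (N : ℕ) : Type := {p : Fin N × Fin N // p.1 < p.2}

/-- Joint law of the latent positions `(Z_i)_{i}` (i.i.d. `N(0, σ² I_d)`) and of the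
edge weights `(Y_{ij})_{i<j}`, which given the latent positions are conditionally independent
Poisson variables with intensity `exp (α_i + α_j - β ‖Z_i - Z_j‖²)`. -/
def jointLaw (d N : ℕ) (β : ℝ) (α : Fin N → ℝ) (σ2 : ℝ) :
    Measure ((Fin N → EuclideanSpace ℝ (Fin d)) × (Pairs N → ℕ)) :=
  (volume.withDensity fun z : Fin N → EuclideanSpace ℝ (Fin d) =>
      ENNReal.ofReal (∏ i, gaussPdf d σ2 (z i))).bind fun z =>
    (Measure.pi fun p : Pairs N =>
        poissonMeasure
          (Real.exp (α p.1.1 + α p.1.2 - β * ‖z p.1.1 - z p.1.2‖ ^ 2)).toNNReal).map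
      fun y => (z, y)

/-- The Markov-switching latent space (MS-LS) network model: a hidden `K`-state Markov chain
`s`, state-dependent i.i.d. Gaussian latent positions `Z`, and symmetric edge weights `Y`
that conditionally on the current state (and given the latent positions) are independent
Poisson variables with log-intensity `α i + α j - β ‖Z i k - Z j k‖²`. -/
structure MSLS (Ω : Type) [MeasurableSpace Ω] where
  /-- the underlying probability measure -/
  P : Measure Ω
  isProb : IsProbabilityMeasure P
  /-- the dimension of the latent space -/
  d : ℕ
  /-- the number of nodes -/
  N : ℕ
  /-- the number of states of the hidden Markov chain -/
  K : ℕ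
  β : ℝ
  β_pos : 0 < β
  /-- individual effects -/
  α : Fin N → ℝ
  /-- state-specific variances of the latent positions -/
  σ2 : Fin K → ℝ
  σ2_pos : ∀ k, 0 < σ2 k
  /-- transition probabilities of the hidden Markov chain -/
  q : Fin K → Fin K → ℝ
  q_nonneg : ∀ l k, 0 ≤ q l k
  q_sum : ∀ l, ∑ k, q l k = 1
  /-- the hidden Markov chain -/
  s : ℕ → Ω → Fin K
  s_meas : ∀ t, Measurable (s t)
  /-- the latent positions in each state -/
  Z : Fin N → Fin K → Ω → EuclideanSpace ℝ (Fin d)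
  Z_meas : ∀ i k, Measurable (Z i k)
  /-- the edge weights -/
  Y : Fin N → Fin N → ℕ → Ω → ℕ
  Y_meas : ∀ i j t, Measurable (Y i j t)
  Y_symm : ∀ i j t ω, Y i j t ω = Y j i t ω
  state_pos : ∀ t k, P {ω | s t ω = k} ≠ 0
  /-- Markov transition probabilities -/
  trans_prob : ∀ t l k, ((P[|{ω | s t ω = l}]) {ω | s (t + 1) ω = k}).toReal = q l k
  /-- conditionally on the current state, the latent positions and the edge weights follow
  the Poisson latent space law -/
  cond_law_state : ∀ t k,
    (P[|{ω | s t ω = k}]).map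
        (fun ω => ((fun i => Z i k ω), fun p : Pairs N => Y p.1.1 p.1.2 t ω)) =
      jointLaw d N β α (σ2 k)
  /-- conditionally on the previous and current state, the latent positions and the edge
  weights follow the Poisson latent space law of the current state -/
  cond_law_pair : ∀ t l k, q l k ≠ 0 →
    (P[|{ω | s t ω = l} ∩ {ω | s (t + 1) ω = k}]).map
        (fun ω => ((fun i => Z i k ω), fun p : Pairs N => Y p.1.1 p.1.2 (t + 1) ω)) =
      jointLaw d N β α (σ2 k)

attribute [instance] MSLS.isProb

/-- The nodal strength `Y_{it} = Σ_{j ≠ i} Y_{ijt}` of node `i` at time `t`. -/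
def MSLS.strength {Ω : Type} [MeasurableSpace Ω] (M : MSLS Ω) (i : Fin M.N) (t : ℕ)
    (ω : Ω) : ℕ :=
  ∑ j ∈ Finset.univ.erase i, M.Y i j t ω

end

open scoped NNReal

/-!
Given the latent positions, the strength of node `i` is a sum of independent Poisson variables,
hence Poisson with intensity `Λ = ∑_{j ≠ i} exp (α_i + α_j - β ‖Z_i - Z_j‖²)`; by the law of total
variance its variance is `𝔼 Λ + Var Λ`. Now `Λ` is a weighted sum of Gaussian kernels of distances.
Integrating such a kernel against the law of `Z_j` leaves, after completing the square, a multiple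
of a Gaussian kernel in `Z_i`, and two kernels sharing the node `i` are independent given `Z_i`; so
the means, variances and covariances of the kernels all reduce to one-point Gaussian integrals.
-/

section TotalVariance

variable {X Y : Type*} [MeasurableSpace X] [MeasurableSpace Y] {μ : Measure X} {κ : Kernel X Y}

section Integral

variable {E : Type*} [NormedAddCommGroup E] [NormedSpace ℝ E] {f : Y → E}

lemma integral_measure_comp (hf : Integrable f (κ ∘ₘ μ)) :
    ∫ y, f y ∂(κ ∘ₘ μ) = ∫ x, ∫ y, f y ∂κ x ∂μ := by
  rw [Measure.comp_eq_comp_const_apply] at hf ⊢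
  rw [Kernel.integral_comp hf, Kernel.const_apply]

lemma integrable_integral_of_comp (hf : Integrable f (κ ∘ₘ μ)) :
    Integrable (fun x => ∫ y, f y ∂κ x) μ := by
  rw [Measure.comp_eq_comp_const_apply] at hf
  exact hf.integral_comp

end Integral

variable {f : Y → ℝ}

lemma ae_memLp_two_of_memLp_comp (hf : MemLp f 2 (κ ∘ₘ μ)) : ∀ᵐ x ∂μ, MemLp f 2 (κ x) := by
  have hmeas : ∀ᵐ x ∂μ, AEStronglyMeasurable f (κ x) := by
    have := hf.1
    rw [Measure.comp_eq_comp_const_apply] at this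
    exact this.comp
  filter_upwards [hmeas, Measure.ae_integrable_of_integrable_comp hf.integrable_sq] with x hx hsq
  exact (memLp_two_iff_integrable_sq hx).2 hsq

variable [IsMarkovKernel κ]

lemma memLp_two_integral_of_memLp_comp [IsFiniteMeasure μ] (hf : MemLp f 2 (κ ∘ₘ μ)) :
    MemLp (fun x => ∫ y, f y ∂κ x) 2 μ := by
  have hmean := integrable_integral_of_comp (hf.integrable one_le_two)
  rw [memLp_two_iff_integrable_sq hmean.1]
  refine (integrable_integral_of_comp hf.integrable_sq).mono' (hmean.1.pow 2) ?_
  filter_upwards [ae_memLp_two_of_memLp_comp hf] with x hx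
  have h : 0 ≤ Var[f; κ x] := variance_nonneg f (κ x)
  rw [variance_eq_sub hx] at h
  simpa using h

theorem variance_comp_eq_integral_variance_add [IsProbabilityMeasure μ]
    (hf : MemLp f 2 (κ ∘ₘ μ)) :
    Var[f; κ ∘ₘ μ] = ∫ x, Var[f; κ x] ∂μ + Var[fun x => ∫ y, f y ∂κ x; μ] := by
  have hmean := memLp_two_integral_of_memLp_comp hf
  have hvar : (fun x => Var[f; κ x]) =ᵐ[μ] fun x => ∫ y, f y ^ 2 ∂κ x - (∫ y, f y ∂κ x) ^ 2 := by
    filter_upwards [ae_memLp_two_of_memLp_comp hf] with x hx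
    exact variance_eq_sub hx
  rw [variance_eq_sub hf, variance_eq_sub hmean, integral_congr_ae hvar,
    integral_sub (integrable_integral_of_comp hf.integrable_sq) hmean.integrable_sq,
    integral_measure_comp (hf.integrable one_le_two)]
  simp only [Pi.pow_apply]
  rw [integral_measure_comp hf.integrable_sq, sub_add_sub_cancel]

end TotalVariance

section Poisson

lemma poissonWeight_succ (r : ℝ) (n : ℕ) :
    exp (-r) * r ^ (n + 1) / (n + 1).factorial * (n + 1 : ℕ) =
      r * (exp (-r) * r ^ n / n.factorial) := by
  rw [Nat.factorial_succ]
  push_cast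
  field_simp
  rw [pow_succ']

lemma integral_natCast_mul_poissonMeasure (r : ℝ≥0) (g : ℕ → ℝ) :
    ∫ n, n * g n ∂poissonMeasure r = r * ∫ n, g (n + 1) ∂poissonMeasure r := by
  rw [integral_poissonMeasure, integral_poissonMeasure, ← tsum_mul_left]
  refine (Function.Injective.tsum_eq (add_left_injective 1) ?_).symm.trans
    (tsum_congr fun n => ?_)
  · rintro (_ | n) hn
    · simp at hn
    · exact ⟨n, rfl⟩
  · rw [smul_eq_mul, smul_eq_mul, ← mul_assoc, poissonWeight_succ, mul_assoc]

lemma integrable_natCast_mul_poissonMeasure {r : ℝ≥0} {g : ℕ → ℝ}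
    (hg : Integrable (fun n => g (n + 1)) (poissonMeasure r)) :
    Integrable (fun n => n * g n) (poissonMeasure r) := by
  rw [integrable_poissonMeasure_iff] at hg ⊢
  rw [← summable_nat_add_iff 1]
  refine (hg.mul_left (r : ℝ)).congr fun n => ?_
  rw [norm_mul, Real.norm_natCast, ← mul_assoc, ← mul_assoc, poissonWeight_succ]

lemma integral_natCast_poissonMeasure (r : ℝ≥0) : ∫ n, (n : ℝ) ∂poissonMeasure r = r := by
  simpa using integral_natCast_mul_poissonMeasure r 1

lemma integrable_natCast_poissonMeasure (r : ℝ≥0) :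
    Integrable (fun n : ℕ => (n : ℝ)) (poissonMeasure r) := by
  simpa using integrable_natCast_mul_poissonMeasure (r := r) (g := 1) (integrable_const 1)

lemma integrable_natCast_sq_poissonMeasure (r : ℝ≥0) :
    Integrable (fun n : ℕ => (n : ℝ) ^ 2) (poissonMeasure r) := by
  simp_rw [sq]
  refine integrable_natCast_mul_poissonMeasure ?_
  simpa using (integrable_natCast_poissonMeasure r).add (integrable_const 1)

lemma integral_natCast_sq_poissonMeasure (r : ℝ≥0) :
    ∫ n, (n : ℝ) ^ 2 ∂poissonMeasure r = r ^ 2 + r := by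
  simp_rw [sq, integral_natCast_mul_poissonMeasure, Nat.cast_add, Nat.cast_one]
  rw [integral_add (integrable_natCast_poissonMeasure r) (integrable_const 1),
    integral_natCast_poissonMeasure, integral_const, probReal_univ, one_smul, mul_add, mul_one]

lemma variance_natCast_poissonMeasure (r : ℝ≥0) :
    Var[fun n : ℕ => (n : ℝ); poissonMeasure r] = r := by
  rw [variance_eq_sub ((memLp_two_iff_integrable_sq .of_discrete).2
    (integrable_natCast_sq_poissonMeasure r)), integral_natCast_poissonMeasure]
  simp only [Pi.pow_apply, integral_natCast_sq_poissonMeasure, add_sub_cancel_left]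

lemma hasLaw_sum_poissonMeasure {Ω ι : Type*} [MeasurableSpace Ω] {P : Measure Ω}
    {X : ι → Ω → ℕ} {r : ι → ℝ≥0} (hind : iIndepFun X P)
    (hX : ∀ i, HasLaw (X i) (poissonMeasure (r i)) P) (s : Finset ι) :
    HasLaw (∑ i ∈ s, X i) (poissonMeasure (∑ i ∈ s, r i)) P := by
  classical
  have := hind.isProbabilityMeasure
  induction s using Finset.induction_on with
  | empty =>
    have hzero : poissonMeasure 0 = Measure.dirac 0 := by
      refine Measure.ext_of_singleton fun n => ?_
      rcases n with _ | n <;> simp [poissonMeasure_singleton]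
    refine ⟨aemeasurable_const, ?_⟩
    simp only [Finset.sum_empty, hzero]
    rw [show (0 : Ω → ℕ) = fun _ => 0 from rfl, Measure.map_const, measure_univ, one_smul]
  | insert i s hi ih =>
    rw [Finset.sum_insert hi, Finset.sum_insert hi]
    exact (hind.indepFun_finsetSum_of_notMem₀ (fun i => (hX i).aemeasurable) hi).symm
      |>.hasLaw_add_poissonMeasure (hX i) ih

lemma measurable_poissonMeasure : Measurable poissonMeasure := by
  refine Measure.measurable_of_measurable_coe _ fun s _ => ?_
  simp only [poissonMeasure, Measure.sum_apply_of_countable, Measure.smul_apply]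
  fun_prop

/-- The Poisson distribution as a Markov kernel of its rate: `poissonRateKernel ∘ₘ ρ` is the mixed
Poisson distribution with mixing measure `ρ`. -/
noncomputable def poissonRateKernel : Kernel ℝ≥0 ℕ :=
  ⟨poissonMeasure, measurable_poissonMeasure⟩

lemma poissonRateKernel_apply (r : ℝ≥0) : poissonRateKernel r = poissonMeasure r := rfl

instance : IsMarkovKernel poissonRateKernel :=
  ⟨fun r => by rw [poissonRateKernel_apply]; infer_instance⟩

lemma memLp_natCast_poissonRateKernel_comp {ρ : Measure ℝ≥0} [IsFiniteMeasure ρ]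
    (hρ : MemLp (fun r : ℝ≥0 => (r : ℝ)) 2 ρ) :
    MemLp (fun n : ℕ => (n : ℝ)) 2 (poissonRateKernel ∘ₘ ρ) := by
  rw [memLp_two_iff_integrable_sq .of_discrete, Measure.integrable_comp_iff .of_discrete]
  simp only [poissonRateKernel_apply, norm_pow, Real.norm_natCast,
    integral_natCast_sq_poissonMeasure]
  exact ⟨.of_forall integrable_natCast_sq_poissonMeasure,
    hρ.integrable_sq.add (hρ.integrable one_le_two)⟩

theorem variance_natCast_poissonRateKernel_comp {ρ : Measure ℝ≥0} [IsProbabilityMeasure ρ]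
    (hρ : MemLp (fun r : ℝ≥0 => (r : ℝ)) 2 ρ) :
    Var[fun n : ℕ => (n : ℝ); poissonRateKernel ∘ₘ ρ] =
      ∫ r, (r : ℝ) ∂ρ + Var[fun r : ℝ≥0 => (r : ℝ); ρ] := by
  rw [variance_comp_eq_integral_variance_add (memLp_natCast_poissonRateKernel_comp hρ)]
  simp only [poissonRateKernel_apply, variance_natCast_poissonMeasure,
    integral_natCast_poissonMeasure]

end Poisson

section PiMeasure

variable {ι : Type*} [Fintype ι] {E : ι → Type*} [∀ i, MeasurableSpace (E i)]

lemma pi_withDensity_ofReal {μ : ∀ i, Measure (E i)} [∀ i, SigmaFinite (μ i)]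
    {f : ∀ i, E i → ℝ} (hf : ∀ i, Integrable (f i) (μ i)) (hnn : ∀ i x, 0 ≤ f i x) :
    Measure.pi (fun i => (μ i).withDensity fun x => ENNReal.ofReal (f i x)) =
      (Measure.pi μ).withDensity fun x => ENNReal.ofReal (∏ i, f i (x i)) := by
  refine Measure.pi_eq fun s hs => ?_
  have hfs (i : ι) : Integrable (f i) ((μ i).restrict (s i)) := (hf i).restrict
  rw [withDensity_apply _ (MeasurableSet.univ_pi hs), Measure.restrict_pi_pi,
    ← ofReal_integral_eq_lintegral_ofReal (Integrable.fintype_prod_dep hfs)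
      (ae_of_all _ fun x => Finset.prod_nonneg fun i _ => hnn i _),
    integral_fintype_prod_eq_prod, ENNReal.ofReal_prod_of_nonneg fun i _ => integral_nonneg (hnn i)]
  refine Finset.prod_congr rfl fun i _ => ?_
  rw [withDensity_apply _ (hs i),
    ofReal_integral_eq_lintegral_ofReal (hfs i) (ae_of_all _ (hnn i))]

lemma measurable_measure_pi {X : Type*} [MeasurableSpace X] {κ : ∀ i, X → Measure (E i)}
    [∀ i x, IsProbabilityMeasure (κ i x)] (hκ : ∀ i, Measurable (κ i)) :
    Measurable fun x => Measure.pi fun i => κ i x := by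
  refine Measurable.measure_of_isPiSystem_of_isProbabilityMeasure generateFrom_pi.symm
    isPiSystem_pi ?_
  rintro _ ⟨s, hs, rfl⟩
  simp only [Measure.pi_pi]
  exact Finset.measurable_prod _ fun i _ => (Measure.measurable_coe (hs i trivial)).comp (hκ i)

variable (μ : ∀ i, Measure (E i)) [∀ i, IsProbabilityMeasure (μ i)] {i j k : ι}

lemma iIndepFun_eval_pi : iIndepFun (fun i (z : ∀ i, E i) => z i) (Measure.pi μ) :=
  iIndepFun_pi (X := fun _ => id) fun _ => aemeasurable_id

lemma hasLaw_eval_pi (i : ι) : HasLaw (fun z : ∀ i, E i => z i) (μ i) (Measure.pi μ) :=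
  (measurePreserving_eval μ i).hasLaw

lemma hasLaw_eval_prodMk_eval_pi (hij : i ≠ j) :
    HasLaw (fun z : ∀ i, E i => (z i, z j)) ((μ i).prod (μ j)) (Measure.pi μ) :=
  (indepFun_iff_hasLaw_prodMk_prod (hasLaw_eval_pi μ i) (hasLaw_eval_pi μ j)).1
    ((iIndepFun_eval_pi μ).indepFun hij)

lemma hasLaw_eval_prodMk_eval_prodMk_eval_pi (hij : i ≠ j) (hik : i ≠ k) (hjk : j ≠ k) :
    HasLaw (fun z : ∀ i, E i => (z i, z j, z k)) ((μ i).prod ((μ j).prod (μ k)))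
      (Measure.pi μ) :=
  (indepFun_iff_hasLaw_prodMk_prod (hasLaw_eval_pi μ i) (hasLaw_eval_prodMk_eval_pi μ hjk)).1
    ((iIndepFun_eval_pi μ).indepFun_prodMk measurable_pi_apply j k i hij.symm hik.symm).symm

lemma integral_eval_eval_pi (hij : i ≠ j) {f : E i → E j → ℝ}
    (hf : Integrable f.uncurry ((μ i).prod (μ j))) :
    ∫ z, f (z i) (z j) ∂Measure.pi μ = ∫ x, ∫ y, f x y ∂μ j ∂μ i :=
  ((hasLaw_eval_prodMk_eval_pi μ hij).integral_comp hf.1).trans (integral_prod _ hf)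

lemma integral_eval_mul_eval_pi (hij : i ≠ j) (hik : i ≠ k) (hjk : j ≠ k) {f : E i → E j → ℝ}
    {g : E i → E k → ℝ}
    (hfg : Integrable (fun p : E i × E j × E k => f p.1 p.2.1 * g p.1 p.2.2)
      ((μ i).prod ((μ j).prod (μ k)))) :
    ∫ z, f (z i) (z j) * g (z i) (z k) ∂Measure.pi μ =
      ∫ x, (∫ y, f x y ∂μ j) * ∫ w, g x w ∂μ k ∂μ i := by
  refine ((hasLaw_eval_prodMk_eval_prodMk_eval_pi μ hij hik hjk).integral_comp hfg.1).trans ?_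
  rw [integral_prod _ hfg]
  exact integral_congr_ae (.of_forall fun x => integral_prod_mul (f x) (g x))

end PiMeasure

section GaussianKernel

/-- The Gaussian kernel `exp (-c ‖x - y‖²)`, through which the distance between two latent
positions enters the intensity of the edge joining them. -/
noncomputable def gaussKernel {V : Type*} [SeminormedAddCommGroup V] (c : ℝ) (x y : V) : ℝ :=
  Real.exp (-c * ‖x - y‖ ^ 2)

variable {V : Type*} [SeminormedAddCommGroup V] {c : ℝ}

lemma gaussKernel_nonneg (c : ℝ) (x y : V) : 0 ≤ gaussKernel c x y := (exp_pos _).le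

lemma gaussKernel_le_one (hc : 0 ≤ c) (x y : V) : gaussKernel c x y ≤ 1 :=
  exp_le_one_iff.2 <| by rw [neg_mul, neg_nonpos]; positivity

lemma norm_gaussKernel_le_one (hc : 0 ≤ c) (x y : V) : ‖gaussKernel c x y‖ ≤ 1 := by
  rw [Real.norm_of_nonneg (gaussKernel_nonneg c x y)]
  exact gaussKernel_le_one hc x y

lemma gaussKernel_comm (c : ℝ) (x y : V) : gaussKernel c x y = gaussKernel c y x := by
  rw [gaussKernel, gaussKernel, norm_sub_rev]

lemma gaussKernel_sq (c : ℝ) (x y : V) : gaussKernel c x y ^ 2 = gaussKernel (2 * c) x y := by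
  rw [gaussKernel, gaussKernel, ← Real.exp_nat_mul, Nat.cast_ofNat, neg_mul, neg_mul,
    mul_neg, mul_assoc]

lemma gaussKernel_self (c : ℝ) (x : V) : gaussKernel c x x = 1 := by
  simp [gaussKernel]

lemma gaussKernel_zero (x y : V) : gaussKernel 0 x y = 1 := by
  simp [gaussKernel]

@[fun_prop]
lemma continuous_gaussKernel (c : ℝ) : Continuous fun p : V × V => gaussKernel c p.1 p.2 := by
  unfold gaussKernel
  fun_prop

lemma memLp_gaussKernel_eval [MeasurableSpace V] [BorelSpace V] [SecondCountableTopology V]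
    {ι : Type*} [Countable ι] {μ : Measure (ι → V)} [IsFiniteMeasure μ] (hc : 0 ≤ c) (i j : ι)
    (p : ENNReal) : MemLp (fun z => gaussKernel c (z i) (z j)) p μ :=
  .of_bound (by fun_prop) 1 (ae_of_all _ fun _ => norm_gaussKernel_le_one hc _ _)

end GaussianKernel

section Gaussian

variable {d : ℕ} {v c : ℝ}

lemma continuous_gaussPdf (d : ℕ) (v : ℝ) : Continuous (gaussPdf d v) := by
  unfold gaussPdf
  fun_prop

lemma gaussPdf_nonneg (hv : 0 < v) (x : EuclideanSpace ℝ (Fin d)) : 0 ≤ gaussPdf d v x := by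
  unfold gaussPdf
  positivity

-- Completing the square in `y`.
lemma gaussPdf_mul_gaussKernel (hv : 0 < v) (hc : 0 ≤ c) (x y : EuclideanSpace ℝ (Fin d)) :
    gaussPdf d v y * gaussKernel c x y =
      (2 * π * v) ^ (-(d : ℝ) / 2) * gaussKernel (c / (2 * v * c + 1)) x 0 *
        rexp (-((2 * v * c + 1) / (2 * v)) * ‖y - (2 * v * c / (2 * v * c + 1)) • x‖ ^ 2) := by
  have hb : 2 * v * c + 1 ≠ 0 := by positivity
  rw [gaussPdf, gaussKernel, gaussKernel, mul_assoc _ (rexp _), mul_assoc _ (rexp _),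
    ← Real.exp_add, ← Real.exp_add, sub_zero, norm_sub_sq_real, norm_sub_sq_real, norm_smul,
    inner_smul_right, real_inner_comm, mul_pow, Real.norm_eq_abs, sq_abs]
  congr 2
  field_simp
  ring

lemma integral_gaussPdf_mul_gaussKernel (hv : 0 < v) (hc : 0 ≤ c)
    (x : EuclideanSpace ℝ (Fin d)) :
    ∫ y, gaussPdf d v y * gaussKernel c x y =
      (2 * v * c + 1) ^ (-(d : ℝ) / 2) * gaussKernel (c / (2 * v * c + 1)) x 0 := by
  have hb : 0 < 2 * v * c + 1 := by positivity
  have hmass : (2 * π * v) ^ (-(d : ℝ) / 2) * (π / ((2 * v * c + 1) / (2 * v))) ^ ((d : ℝ) / 2) =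
      (2 * v * c + 1) ^ (-(d : ℝ) / 2) := by
    rw [show π / ((2 * v * c + 1) / (2 * v)) = 2 * π * v / (2 * v * c + 1) by field_simp,
      Real.div_rpow (by positivity) hb.le, ← mul_div_assoc, ← Real.rpow_add (by positivity),
      neg_div, neg_add_cancel, Real.rpow_zero, Real.rpow_neg hb.le, one_div]
  simp_rw [gaussPdf_mul_gaussKernel hv hc]
  rw [integral_const_mul, integral_sub_right_eq_self
      (fun y => rexp (-((2 * v * c + 1) / (2 * v)) * ‖y‖ ^ 2)),
    GaussianFourier.integral_rexp_neg_mul_sq_norm (by positivity), finrank_euclideanSpace_fin,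
    mul_right_comm, hmass]

lemma integral_gaussPdf (hv : 0 < v) : ∫ x, gaussPdf d v x = 1 := by
  simpa [gaussKernel_zero] using integral_gaussPdf_mul_gaussKernel (d := d) hv le_rfl 0

lemma integrable_gaussPdf (hv : 0 < v) : Integrable (gaussPdf d v) :=
  integrable_of_integral_eq_one (integral_gaussPdf hv)

lemma isProbabilityMeasure_gaussMeasure (hv : 0 < v) :
    IsProbabilityMeasure (gaussMeasure d v) := by
  constructor
  rw [gaussMeasure, withDensity_apply _ .univ, setLIntegral_univ,
    ← ofReal_integral_eq_lintegral_ofReal (integrable_gaussPdf hv)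
      (ae_of_all _ (gaussPdf_nonneg hv)), integral_gaussPdf hv, ENNReal.ofReal_one]

lemma pi_gaussMeasure {ι : Type*} [Fintype ι] (hv : 0 < v) :
    Measure.pi (fun _ : ι => gaussMeasure d v) =
      volume.withDensity fun z => ENNReal.ofReal (∏ i, gaussPdf d v (z i)) :=
  pi_withDensity_ofReal (fun _ => integrable_gaussPdf hv) fun _ => gaussPdf_nonneg hv

lemma integral_gaussKernel_gaussMeasure (hv : 0 < v) (hc : 0 ≤ c)
    (x : EuclideanSpace ℝ (Fin d)) :
    ∫ y, gaussKernel c x y ∂gaussMeasure d v =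
      (2 * v * c + 1) ^ (-(d : ℝ) / 2) * gaussKernel (c / (2 * v * c + 1)) x 0 := by
  rw [gaussMeasure, integral_withDensity_eq_integral_toReal_smul
      (continuous_gaussPdf d v).measurable.ennreal_ofReal
      (ae_of_all _ fun _ => ENNReal.ofReal_lt_top), ← integral_gaussPdf_mul_gaussKernel hv hc]
  simp only [ENNReal.toReal_ofReal (gaussPdf_nonneg hv _), smul_eq_mul]

lemma integral_gaussKernel_zero_gaussMeasure (hv : 0 < v) (hc : 0 ≤ c) :
    ∫ x, gaussKernel c x 0 ∂gaussMeasure d v = (2 * v * c + 1) ^ (-(d : ℝ) / 2) := by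
  simp_rw [gaussKernel_comm c _ (0 : EuclideanSpace ℝ (Fin d))]
  rw [integral_gaussKernel_gaussMeasure hv hc, gaussKernel_self, mul_one]

lemma integral_integral_gaussKernel (hv : 0 < v) (hc : 0 ≤ c) :
    ∫ x, ∫ y, gaussKernel c x y ∂gaussMeasure d v ∂gaussMeasure d v =
      (4 * v * c + 1) ^ (-(d : ℝ) / 2) := by
  simp_rw [integral_gaussKernel_gaussMeasure hv hc]
  rw [integral_const_mul, integral_gaussKernel_zero_gaussMeasure hv (by positivity),
    ← Real.mul_rpow (by positivity) (by positivity)]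
  congr 1
  field_simp
  ring

lemma integral_sq_integral_gaussKernel (hv : 0 < v) (hc : 0 ≤ c) :
    ∫ x, (∫ y, gaussKernel c x y ∂gaussMeasure d v) ^ 2 ∂gaussMeasure d v =
      (2 * v * c + 1) ^ (-(d : ℝ) / 2) * (6 * v * c + 1) ^ (-(d : ℝ) / 2) := by
  simp_rw [integral_gaussKernel_gaussMeasure hv hc, mul_pow, gaussKernel_sq]
  rw [integral_const_mul, integral_gaussKernel_zero_gaussMeasure hv (by positivity), sq, mul_assoc,
    ← Real.mul_rpow (by positivity) (by positivity)]
  congr 2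
  field_simp
  ring

end Gaussian

section GaussianPositions

variable {ι : Type*} [Fintype ι] {d : ℕ} {v c : ℝ} {i j k : ι}

lemma integral_gaussKernel_eval (hv : 0 < v) (hc : 0 ≤ c) (hij : i ≠ j) :
    ∫ z, gaussKernel c (z i) (z j) ∂Measure.pi (fun _ : ι => gaussMeasure d v) =
      (4 * v * c + 1) ^ (-(d : ℝ) / 2) := by
  have := isProbabilityMeasure_gaussMeasure (d := d) hv
  rw [integral_eval_eval_pi _ hij, integral_integral_gaussKernel hv hc]
  exact .of_bound (by fun_prop) 1 (ae_of_all _ fun _ => norm_gaussKernel_le_one hc _ _)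

lemma integral_gaussKernel_eval_mul_gaussKernel_eval (hv : 0 < v) (hc : 0 ≤ c) (hij : i ≠ j)
    (hik : i ≠ k) (hjk : j ≠ k) :
    ∫ z, gaussKernel c (z i) (z j) * gaussKernel c (z i) (z k)
        ∂Measure.pi (fun _ : ι => gaussMeasure d v) =
      (2 * v * c + 1) ^ (-(d : ℝ) / 2) * (6 * v * c + 1) ^ (-(d : ℝ) / 2) := by
  have := isProbabilityMeasure_gaussMeasure (d := d) hv
  rw [integral_eval_mul_eval_pi _ hij hik hjk]
  · simp_rw [← sq]
    exact integral_sq_integral_gaussKernel hv hc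
  · refine .of_bound (by fun_prop) (1 * 1) (ae_of_all _ fun _ => ?_)
    rw [norm_mul]
    gcongr <;> exact norm_gaussKernel_le_one hc _ _

lemma variance_gaussKernel_eval (hv : 0 < v) (hc : 0 ≤ c) (hij : i ≠ j) :
    Var[fun z => gaussKernel c (z i) (z j); Measure.pi (fun _ : ι => gaussMeasure d v)] =
      (8 * v * c + 1) ^ (-(d : ℝ) / 2) - (4 * v * c + 1) ^ (-(d : ℝ)) := by
  have := isProbabilityMeasure_gaussMeasure (d := d) hv
  rw [variance_eq_sub (memLp_gaussKernel_eval hc i j 2), integral_gaussKernel_eval hv hc hij]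
  simp only [Pi.pow_apply, gaussKernel_sq]
  rw [integral_gaussKernel_eval hv (by positivity) hij, ← Real.rpow_mul_natCast (by positivity),
    Nat.cast_ofNat, div_mul_cancel₀ _ two_ne_zero]
  ring_nf

lemma covariance_gaussKernel_eval (hv : 0 < v) (hc : 0 ≤ c) (hij : i ≠ j) (hik : i ≠ k)
    (hjk : j ≠ k) :
    cov[fun z => gaussKernel c (z i) (z j), fun z => gaussKernel c (z i) (z k);
        Measure.pi (fun _ : ι => gaussMeasure d v)] =
      (2 * v * c + 1) ^ (-(d : ℝ) / 2) * (6 * v * c + 1) ^ (-(d : ℝ) / 2) -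
        (4 * v * c + 1) ^ (-(d : ℝ)) := by
  have := isProbabilityMeasure_gaussMeasure (d := d) hv
  rw [covariance_eq_sub (memLp_gaussKernel_eval hc i j 2) (memLp_gaussKernel_eval hc i k 2),
    integral_gaussKernel_eval hv hc hij, integral_gaussKernel_eval hv hc hik]
  simp only [Pi.mul_apply]
  rw [integral_gaussKernel_eval_mul_gaussKernel_eval hv hc hij hik hjk,
    ← Real.rpow_add (by positivity), add_halves]

end GaussianPositions

section EquicorrelatedSum

lemma variance_sum_const_mul_of_covariance_eq {Ω ι : Type*} [MeasurableSpace Ω] {μ : Measure Ω}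
    [IsFiniteMeasure μ] {X : ι → Ω → ℝ} {s : Finset ι}
    (hX : ∀ j ∈ s, MemLp (X j) 2 μ) (a : ι → ℝ) {V C : ℝ} (hV : ∀ j ∈ s, Var[X j; μ] = V)
    (hC : ∀ j ∈ s, ∀ k ∈ s, j ≠ k → cov[X j, X k; μ] = C) :
    Var[fun ω => ∑ j ∈ s, a j * X j ω; μ] =
      V * ∑ j ∈ s, a j ^ 2 + C * ∑ p ∈ s.offDiag, a p.1 * a p.2 := by
  classical
  have hcov (j k : ι) : cov[fun ω => a j * X j ω, fun ω => a k * X k ω; μ] =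
      a j * a k * cov[X j, X k; μ] := by
    rw [covariance_const_mul_left, covariance_const_mul_right, mul_assoc]
  rw [variance_fun_sum' fun j hj => (hX j hj).const_mul (a j), ← Finset.sum_product',
    ← s.diag_union_offDiag, Finset.sum_union s.disjoint_diag_offDiag, Finset.sum_diag,
    Finset.mul_sum, Finset.mul_sum]
  congr 1
  · refine Finset.sum_congr rfl fun j hj => ?_
    rw [hcov, covariance_self (hX j hj).aemeasurable, hV j hj]
    ring
  · refine Finset.sum_congr rfl fun p hp => ?_
    obtain ⟨hj, hk, hjk⟩ := Finset.mem_offDiag.1 hp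
    rw [hcov, hC _ hj _ hk hjk, mul_comm]

end EquicorrelatedSum

section Intensity

/-- The Poisson intensity of the edge joining the nodes `i` and `j`, given the latent
positions `z`. -/
noncomputable def edgeIntensity {ι V : Type*} [SeminormedAddCommGroup V] (β : ℝ) (α : ι → ℝ)
    (z : ι → V) (i j : ι) : ℝ≥0 :=
  (Real.exp (α i + α j - β * ‖z i - z j‖ ^ 2)).toNNReal

/-- The Poisson intensity of the strength of the node `i`, given the latent positions `z`. -/
noncomputable def strengthIntensity {ι V : Type*} [Fintype ι] [DecidableEq ι]
    [SeminormedAddCommGroup V] (β : ℝ) (α : ι → ℝ) (i : ι) (z : ι → V) : ℝ≥0 :=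
  ∑ j ∈ Finset.univ.erase i, edgeIntensity β α z i j

variable {ι V : Type*} [SeminormedAddCommGroup V] (β : ℝ) (α : ι → ℝ)

lemma coe_edgeIntensity (z : ι → V) (i j : ι) :
    (edgeIntensity β α z i j : ℝ) = rexp (α i + α j) * gaussKernel β (z i) (z j) := by
  rw [edgeIntensity, Real.coe_toNNReal _ (exp_pos _).le, gaussKernel, ← Real.exp_add, neg_mul,
    sub_eq_add_neg]

lemma edgeIntensity_comm (z : ι → V) (i j : ι) :
    edgeIntensity β α z i j = edgeIntensity β α z j i := by
  rw [edgeIntensity, edgeIntensity, add_comm, norm_sub_rev]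

lemma coe_strengthIntensity [Fintype ι] [DecidableEq ι] (i : ι) (z : ι → V) :
    (strengthIntensity β α i z : ℝ) =
      ∑ j ∈ Finset.univ.erase i, rexp (α i + α j) * gaussKernel β (z i) (z j) := by
  simp only [strengthIntensity, NNReal.coe_sum, coe_edgeIntensity]

variable [MeasurableSpace V] [OpensMeasurableSpace V] [MeasurableSub₂ V]

lemma measurable_edgeIntensity (i j : ι) :
    Measurable fun z : ι → V => edgeIntensity β α z i j := by
  unfold edgeIntensity
  fun_prop

lemma measurable_strengthIntensity [Fintype ι] [DecidableEq ι] (i : ι) :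
    Measurable (strengthIntensity β α i : (ι → V) → ℝ≥0) :=
  Finset.measurable_sum _ fun j _ => measurable_edgeIntensity β α i j

end Intensity

section StrengthMoments

variable {ι : Type*} [Fintype ι] [DecidableEq ι] {d : ℕ} {v β : ℝ}

lemma memLp_strengthIntensity {V : Type*} [SeminormedAddCommGroup V] [MeasurableSpace V]
    [BorelSpace V] [SecondCountableTopology V] {μ : Measure (ι → V)} [IsFiniteMeasure μ]
    (hβ : 0 ≤ β) (α : ι → ℝ) (i : ι) (p : ENNReal) :
    MemLp (fun z => (strengthIntensity β α i z : ℝ)) p μ := by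
  simp only [coe_strengthIntensity]
  exact memLp_finsetSum _ fun j _ => (memLp_gaussKernel_eval hβ i j p).const_mul _

lemma integral_strengthIntensity (hv : 0 < v) (hβ : 0 ≤ β) (α : ι → ℝ) (i : ι) :
    ∫ z, (strengthIntensity β α i z : ℝ) ∂Measure.pi (fun _ => gaussMeasure d v) =
      (4 * v * β + 1) ^ (-(d : ℝ) / 2) * ∑ j ∈ Finset.univ.erase i, rexp (α i + α j) := by
  have := isProbabilityMeasure_gaussMeasure (d := d) hv
  simp only [coe_strengthIntensity]
  rw [integral_finsetSum _ fun j _ =>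
    ((memLp_gaussKernel_eval hβ i j 1).integrable le_rfl).const_mul _, Finset.mul_sum]
  refine Finset.sum_congr rfl fun j hj => ?_
  rw [integral_const_mul, integral_gaussKernel_eval hv hβ (Finset.ne_of_mem_erase hj).symm,
    mul_comm]

lemma variance_strengthIntensity (hv : 0 < v) (hβ : 0 ≤ β) (α : ι → ℝ) (i : ι) :
    Var[fun z => (strengthIntensity β α i z : ℝ); Measure.pi (fun _ => gaussMeasure d v)] =
      ((8 * v * β + 1) ^ (-(d : ℝ) / 2) - (4 * v * β + 1) ^ (-(d : ℝ))) *
          ∑ j ∈ Finset.univ.erase i, rexp (α i + α j) ^ 2 +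
        ((2 * v * β + 1) ^ (-(d : ℝ) / 2) * (6 * v * β + 1) ^ (-(d : ℝ) / 2) -
            (4 * v * β + 1) ^ (-(d : ℝ))) *
          ∑ p ∈ (Finset.univ.erase i).offDiag, rexp (α i + α p.1) * rexp (α i + α p.2) := by
  have := isProbabilityMeasure_gaussMeasure (d := d) hv
  simp only [coe_strengthIntensity]
  refine variance_sum_const_mul_of_covariance_eq (fun j _ => memLp_gaussKernel_eval hβ i j 2)
    (fun j => rexp (α i + α j)) (fun j hj => ?_) fun j hj k hk hjk => ?_
  · exact variance_gaussKernel_eval hv hβ (Finset.ne_of_mem_erase hj).symm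
  · exact covariance_gaussKernel_eval hv hβ (Finset.ne_of_mem_erase hj).symm
      (Finset.ne_of_mem_erase hk).symm hjk

end StrengthMoments

section IncidentPairs

variable {N : ℕ}

/-- The pairs of nodes having `i` as an endpoint, indexing the edges that add up to the strength
of `i`. -/
def incidentPairs (i : Fin N) : Finset (Pairs N) := {p | p.1.1 = i ∨ p.1.2 = i}

lemma mem_incidentPairs {i : Fin N} {p : Pairs N} :
    p ∈ incidentPairs i ↔ p.1.1 = i ∨ p.1.2 = i := by
  simp [incidentPairs]

lemma sum_incidentPairs {A : Type*} [AddCommMonoid A] {f : Fin N → Fin N → A}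
    (hf : ∀ i j, f i j = f j i) (i : Fin N) :
    ∑ p ∈ incidentPairs i, f p.1.1 p.1.2 = ∑ j ∈ Finset.univ.erase i, f i j := by
  refine Finset.sum_bij (fun p _ => if p.1.1 = i then p.1.2 else p.1.1) ?_ ?_ ?_ ?_
  · rintro ⟨⟨j, k⟩, hjk⟩ -
    grind
  · rintro ⟨⟨j, k⟩, hjk⟩ hp ⟨⟨j', k'⟩, hjk'⟩ hp' h
    grind [mem_incidentPairs]
  · intro j hj
    rcases lt_or_gt_of_ne (Finset.ne_of_mem_erase hj) with h | h
    · exact ⟨⟨(j, i), h⟩, mem_incidentPairs.2 (.inr rfl), if_neg h.ne⟩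
    · exact ⟨⟨(i, j), h⟩, mem_incidentPairs.2 (.inl rfl), if_pos rfl⟩
  · rintro ⟨⟨j, k⟩, hjk⟩ hp
    grind [mem_incidentPairs]

end IncidentPairs

section StrengthLaw

section EdgeKernel

variable {N : ℕ} {V : Type*} [SeminormedAddCommGroup V] [MeasurableSpace V]
  [OpensMeasurableSpace V] [MeasurableSub₂ V] (β : ℝ) (α : Fin N → ℝ)

lemma measurable_pi_poissonMeasure_edgeIntensity :
    Measurable fun z : Fin N → V =>
      Measure.pi fun p : Pairs N => poissonMeasure (edgeIntensity β α z p.1.1 p.1.2) :=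
  measurable_measure_pi fun p =>
    measurable_poissonMeasure.comp (measurable_edgeIntensity β α p.1.1 p.1.2)

/-- The conditional law of the edge weights given the latent positions: independent Poisson
variables indexed by the pairs of nodes. -/
noncomputable def edgeKernel :
    Kernel (Fin N → V) (Pairs N → ℕ) :=
  ⟨_, measurable_pi_poissonMeasure_edgeIntensity β α⟩

lemma edgeKernel_apply (z : Fin N → V) :
    edgeKernel β α z =
      Measure.pi fun p : Pairs N => poissonMeasure (edgeIntensity β α z p.1.1 p.1.2) :=
  rfl

instance : IsMarkovKernel (edgeKernel (V := V) β α) :=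
  ⟨fun z => by rw [edgeKernel_apply]; infer_instance⟩

lemma hasLaw_sum_incidentPairs_edgeKernel (i : Fin N)
    (z : Fin N → V) :
    HasLaw (fun y => ∑ p ∈ incidentPairs i, y p) (poissonMeasure (strengthIntensity β α i z))
      (edgeKernel β α z) := by
  have h := hasLaw_sum_poissonMeasure (iIndepFun_eval_pi _)
    (hasLaw_eval_pi fun p : Pairs N => poissonMeasure (edgeIntensity β α z p.1.1 p.1.2))
    (incidentPairs i)
  rw [sum_incidentPairs (edgeIntensity_comm β α z)] at h
  rw [edgeKernel_apply, strengthIntensity]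
  convert h using 1
  ext y
  rw [Finset.sum_apply]

lemma map_sum_incidentPairs_edgeKernel (i : Fin N) :
    (edgeKernel (V := V) β α).map (fun y => ∑ p ∈ incidentPairs i, y p) =
      poissonRateKernel.comap (strengthIntensity β α i) (measurable_strengthIntensity β α i) := by
  ext1 z
  rw [Kernel.map_apply _ (by fun_prop), Kernel.comap_apply, poissonRateKernel_apply,
    (hasLaw_sum_incidentPairs_edgeKernel β α i z).map_eq]

end EdgeKernel

variable {d N : ℕ}

lemma jointLaw_eq_compProd {v : ℝ} (hv : 0 < v) (β : ℝ) (α : Fin N → ℝ) :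
    jointLaw d N β α v = Measure.pi (fun _ => gaussMeasure d v) ⊗ₘ edgeKernel β α := by
  have := isProbabilityMeasure_gaussMeasure (d := d) hv
  rw [Measure.compProd_eq_comp_prod, jointLaw, ← pi_gaussMeasure hv]
  congr 1
  ext1 z
  rw [Kernel.prod_apply, Kernel.id_apply, Measure.dirac_prod, edgeKernel_apply]
  rfl

lemma map_sum_incidentPairs_jointLaw {v : ℝ} (hv : 0 < v) (β : ℝ) (α : Fin N → ℝ) (i : Fin N) :
    (jointLaw d N β α v).map (fun p => ∑ q ∈ incidentPairs i, p.2 q) =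
      poissonRateKernel ∘ₘ
        (Measure.pi fun _ => gaussMeasure d v).map (strengthIntensity β α i) := by
  have := isProbabilityMeasure_gaussMeasure (d := d) hv
  have hmeas : Measurable fun y : Pairs N → ℕ => ∑ q ∈ incidentPairs i, y q := by fun_prop
  rw [jointLaw_eq_compProd hv,
    ← Function.comp_def (fun y : Pairs N → ℕ => ∑ q ∈ incidentPairs i, y q),
    ← Measure.map_map hmeas measurable_snd, ← Measure.snd, Measure.snd_compProd,
    Measure.map_comp _ _ hmeas, map_sum_incidentPairs_edgeKernel,
    ← Kernel.comp_deterministic_eq_comap, ← Measure.comp_assoc, Measure.deterministic_comp_eq_map]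

variable {Ω : Type} [MeasurableSpace Ω] (M : MSLS Ω)

lemma MSLS.hasLaw_strength (i : Fin M.N) (t : ℕ) (k : Fin M.K) :
    HasLaw (M.strength i t)
      (poissonRateKernel ∘ₘ
        (Measure.pi fun _ => gaussMeasure M.d (M.σ2 k)).map (strengthIntensity M.β M.α i))
      M.P[|{ω | M.s t ω = k}] := by
  have hpair : AEMeasurable (fun ω => ((fun i => M.Z i k ω), fun p : Pairs M.N =>
      M.Y p.1.1 p.1.2 t ω)) M.P[|{ω | M.s t ω = k}] :=
    ((measurable_pi_lambda _ fun i => M.Z_meas i k).prodMk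
      (measurable_pi_lambda _ fun p => M.Y_meas _ _ t)).aemeasurable
  have hsum : HasLaw (fun p => ∑ q ∈ incidentPairs i, p.2 q) _
      (jointLaw M.d M.N M.β M.α (M.σ2 k)) :=
    ⟨by fun_prop, map_sum_incidentPairs_jointLaw (M.σ2_pos k) M.β M.α i⟩
  convert hsum.comp ⟨hpair, M.cond_law_state t k⟩ using 1
  ext ω
  exact (sum_incidentPairs (M.Y_symm · · t ω) i).symm

end StrengthLaw

theorem statement12_general {Ω : Type} [MeasurableSpace Ω] (M : MSLS Ω) (i : Fin M.N) (t : ℕ)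
    (k : Fin M.K) :
    variance (fun ω => (M.strength i t ω : ℝ)) (M.P[|{ω | M.s t ω = k}]) =
      (4 * M.σ2 k * M.β + 1) ^ (-(M.d : ℝ) / 2) *
          ∑ j ∈ Finset.univ.erase i, rexp (M.α i + M.α j) +
        (((8 * M.σ2 k * M.β + 1) ^ (-(M.d : ℝ) / 2) - (4 * M.σ2 k * M.β + 1) ^ (-(M.d : ℝ))) *
            ∑ j ∈ Finset.univ.erase i, rexp (M.α i + M.α j) ^ 2 +
          ((2 * M.σ2 k * M.β + 1) ^ (-(M.d : ℝ) / 2) * (6 * M.σ2 k * M.β + 1) ^ (-(M.d : ℝ) / 2) -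
              (4 * M.σ2 k * M.β + 1) ^ (-(M.d : ℝ))) *
            ∑ p ∈ (Finset.univ.erase i).offDiag,
              rexp (M.α i + M.α p.1) * rexp (M.α i + M.α p.2)) := by
  have := isProbabilityMeasure_gaussMeasure (d := M.d) (M.σ2_pos k)
  have hmeas : AEMeasurable (strengthIntensity M.β M.α i)
      (Measure.pi fun _ => gaussMeasure M.d (M.σ2 k)) :=
    (measurable_strengthIntensity M.β M.α i).aemeasurable
  have := Measure.isProbabilityMeasure_map hmeas
  have hlaw := M.hasLaw_strength i t k
  have hL2 : MemLp (fun r : ℝ≥0 => (r : ℝ)) 2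
      ((Measure.pi fun _ => gaussMeasure M.d (M.σ2 k)).map (strengthIntensity M.β M.α i)) :=
    (memLp_map_measure_iff (by fun_prop) hmeas).2 (memLp_strengthIntensity M.β_pos.le M.α i 2)
  calc variance (fun ω => (M.strength i t ω : ℝ)) (M.P[|{ω | M.s t ω = k}])
    _ = Var[fun n : ℕ => (n : ℝ); poissonRateKernel ∘ₘ
          (Measure.pi fun _ => gaussMeasure M.d (M.σ2 k)).map (strengthIntensity M.β M.α i)] := by
      rw [← hlaw.map_eq, variance_map .of_discrete hlaw.aemeasurable]
      rfl
    _ = _ := by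
      rw [variance_natCast_poissonRateKernel_comp hL2, integral_map hmeas (by fun_prop),
        variance_map (by fun_prop) hmeas, integral_strengthIntensity (M.σ2_pos k) M.β_pos.le,
        Function.comp_def, variance_strengthIntensity (M.σ2_pos k) M.β_pos.le]

/-- Under the MS-LS model with `α_i + α_j = α` for all pairs, the conditional
variance of the nodal strength within state `k` equals
`e^{2α}(N-1)(8σ_k²β+1)^{-d/2} + (N-1)(N-2)e^{2α}(2σ_k²β+1)^{-d/2}(6σ_k²β+1)^{-d/2}
  + (N-1)e^α(4σ_k²β+1)^{-d/2} - (N-1)²e^{2α}(4σ_k²β+1)^{-d}`. -/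
theorem statement12 {Ω : Type} [MeasurableSpace Ω] (M : MSLS Ω) (a : ℝ)
    (hα : ∀ i j, M.α i + M.α j = a) (i : Fin M.N) (t : ℕ) (k : Fin M.K) :
    variance (fun ω => (M.strength i t ω : ℝ)) (M.P[|{ω | M.s t ω = k}]) =
      Real.exp (2 * a) * ((M.N : ℝ) - 1) * (8 * M.σ2 k * M.β + 1) ^ (-(M.d : ℝ) / 2) +
        ((M.N : ℝ) - 1) * ((M.N : ℝ) - 2) * Real.exp (2 * a) *
          (2 * M.σ2 k * M.β + 1) ^ (-(M.d : ℝ) / 2) *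
          (6 * M.σ2 k * M.β + 1) ^ (-(M.d : ℝ) / 2) +
        ((M.N : ℝ) - 1) * Real.exp a * (4 * M.σ2 k * M.β + 1) ^ (-(M.d : ℝ) / 2) -
        ((M.N : ℝ) - 1) ^ 2 * Real.exp (2 * a) * (4 * M.σ2 k * M.β + 1) ^ (-(M.d : ℝ)) := by
  have hN : ((M.N - 1 : ℕ) : ℝ) = M.N - 1 := Nat.cast_pred i.pos
  rw [statement12_general M i t k]
  simp only [hα, Finset.sum_const, Finset.offDiag_card,
    Finset.card_erase_of_mem (Finset.mem_univ i), Finset.card_univ,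
    Fintype.card_fin, nsmul_eq_mul, Nat.cast_sub (Nat.le_mul_self _), Nat.cast_mul,
    hN, two_mul a, Real.exp_add]
  ring
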